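/- arXiv:1608.01233 — 10 statements merged into one kernel-verified Lean document; each statement's English description precedes it below -/
import Mathlib

section
/- Let α > 0 and x₀ > 0 be real numbers, and define φ(t,u) = (1 - e^{αt}(1 - e^{-αu}))^{-x₀/α} for real t, u with e^{αt}(1 - e^{-αu}) < 1. Then φ satisfies the partial differential equation ∂φ/∂t(t,u) + (1 - e^{αu})·∂φ/∂u(t,u) = 0 at every point (t,u) with e^{αt}(1 - e^{-αu}) < 1, and φ(0,u) = e^{u x₀} for every real u. -/
/-- The moment generating function
`φ(t,u) = (1 - e^{αt}(1 - e^{-αu}))^{-x₀/α}` of the one-dimensional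
Pólya–Eggenberger-like continuum random walk satisfies
`∂φ/∂t + (1 - e^{αu})·∂φ/∂u = 0` wherever `e^{αt}(1 - e^{-αu}) < 1`,
and `φ(0,u) = e^{u x₀}`. -/
theorem stmt_0 (α x₀ : ℝ) (hα : 0 < α) (hx₀ : 0 < x₀)
    (φ : ℝ → ℝ → ℝ)
    (hφ : ∀ t u : ℝ,
      φ t u = (1 - Real.exp (α * t) * (1 - Real.exp (-α * u))) ^ (-x₀ / α)) :
    (∀ t u : ℝ, Real.exp (α * t) * (1 - Real.exp (-α * u)) < 1 →
      deriv (fun s => φ s u) t + (1 - Real.exp (α * u)) * deriv (fun w => φ t w) u = 0) ∧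
    (∀ u : ℝ, φ 0 u = Real.exp (u * x₀)) := by
  refine ⟨fun t u h => ?_, fun u => ?_⟩
  · have hpos : (1 - Real.exp (α * t) * (1 - Real.exp (-α * u))) ≠ 0 := by linarith
    have e1 : HasDerivAt (fun s : ℝ => Real.exp (α * s)) (Real.exp (α * t) * (α * 1)) t :=
      ((hasDerivAt_id t).const_mul α).exp
    have e2 : HasDerivAt (fun w : ℝ => Real.exp (-α * w)) (Real.exp (-α * u) * (-α * 1)) u :=
      ((hasDerivAt_id u).const_mul (-α)).exp
    have d1 := ((e1.mul_const (1 - Real.exp (-α * u))).const_sub 1).rpow_const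
      (p := -x₀ / α) (Or.inl hpos)
    have d2 := (((e2.const_sub 1).const_mul (Real.exp (α * t))).const_sub 1).rpow_const
      (p := -x₀ / α) (Or.inl hpos)
    have f1 : (fun s => φ s u) =
        fun s => (1 - Real.exp (α * s) * (1 - Real.exp (-α * u))) ^ (-x₀ / α) :=
      funext fun s => hφ s u
    have f2 : (fun w => φ t w) =
        fun w => (1 - Real.exp (α * t) * (1 - Real.exp (-α * w))) ^ (-x₀ / α) :=
      funext fun w => hφ t w
    rw [f1, f2, d1.deriv, d2.deriv]
    have hm : Real.exp (α * u) * Real.exp (-α * u) = 1 := by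
      rw [← Real.exp_add]; simp
    generalize (1 - Real.exp (α * t) * (1 - Real.exp (-α * u))) ^ (-x₀ / α - 1) = P
    linear_combination (Real.exp (α * t) * α * (-x₀ / α) * P) * hm
  · rw [hφ]
    have hb : 1 - Real.exp (α * 0) * (1 - Real.exp (-α * u)) = Real.exp (-α * u) := by simp
    rw [hb, ← Real.exp_mul]
    congr 1
    field_simp
end

section
/- Let α > 0 and x₀ > 0 be real numbers and let s be a real number with αs < 1. Then lim_{t→∞} (1 - e^{αt}(1 - e^{-α s e^{-αt}}))^{-x₀/α} = (1 - αs)^{-x₀/α}. -/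
/-- For `α > 0`, `x₀ > 0` and `αs < 1`,
`lim_{t→∞} (1 - e^{αt}(1 - e^{-α s e^{-αt}}))^{-x₀/α} = (1 - αs)^{-x₀/α}`. -/
theorem stmt_1 (α x₀ s : ℝ) (hα : 0 < α) (hx₀ : 0 < x₀) (hs : α * s < 1) :
    Filter.Tendsto
      (fun t : ℝ =>
        (1 - Real.exp (α * t) * (1 - Real.exp (-α * (s * Real.exp (-α * t))))) ^ (-x₀ / α))
      Filter.atTop (nhds ((1 - α * s) ^ (-x₀ / α))) := by
  refine Filter.Tendsto.rpow_const ?_ (Or.inl (by linarith))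
  have hd : HasDerivAt (fun h : ℝ => Real.exp (-α * (s * h))) (-α * s) 0 := by
    have h1 : HasDerivAt (fun h : ℝ => -α * (s * h)) (-α * (s * 1)) 0 :=
      ((hasDerivAt_id (0 : ℝ)).const_mul s).const_mul (-α)
    have h2 := h1.exp
    simpa using h2
  rw [hasDerivAt_iff_tendsto_slope_zero] at hd
  have he : Filter.Tendsto (fun t : ℝ => Real.exp (-α * t)) Filter.atTop (nhdsWithin 0 {0}ᶜ) := by
    refine tendsto_nhdsWithin_iff.2 ⟨?_, Filter.Eventually.of_forall fun t => (Real.exp_pos _).ne'⟩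
    exact Real.tendsto_exp_atBot.comp
      (Filter.tendsto_id.const_mul_atTop_of_neg (by linarith : -α < 0))
  have h3 := (hd.comp he).const_add 1
  have e1 : 1 - α * s = 1 + -α * s := by ring
  rw [e1]
  refine h3.congr fun t => ?_
  have e2 : (Real.exp (-α * t))⁻¹ = Real.exp (α * t) := by
    rw [← Real.exp_neg]; congr 1; ring
  simp only [Function.comp, smul_eq_mul, e2, zero_add, mul_zero, Real.exp_zero]
  ring
end

section
/- Let γ > 0, X₀ ≥ 0 and λ ≥ X₀ be real numbers. Define N(t,u) = 1 + e^{-2γt+γu} + e^{γu} - e^{-2γt}, D(t,u) = 1 - e^{-2γt+γu} + e^{γu} + e^{-2γt}, and η(t,u) = (N(t,u)/D(t,u))^{X₀/γ} · (D(t,u)/2)^{λ/γ}. Then for all t > 0 and all real u, η satisfies ∂η/∂t(t,u) + (e^{γu} - e^{-γu})·∂η/∂u(t,u) + λ(1 - e^{γu})·η(t,u) = 0, and η(0,u) = e^{u X₀} for every real u. -/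
theorem helper_deriv (f g : ℝ → ℝ) (f' g' x p q : ℝ) (hf : HasDerivAt f f' x)
    (hg : HasDerivAt g g' x) (hfp : 0 < f x) (hgp : 0 < g x) :
    HasDerivAt (fun y => (f y / g y) ^ p * (g y / 2) ^ q)
      ((f x / g x) ^ p * (g x / 2) ^ q * (p * (f' / f x - g' / g x) + q * (g' / g x))) x := by
  have h1 : 0 < f x / g x := div_pos hfp hgp
  have h2 : 0 < g x / 2 := by positivity
  have h := ((hf.div hg hgp.ne').rpow_const (p := p) (Or.inl h1.ne')).mul
    ((hg.div_const 2).rpow_const (p := q) (Or.inl h2.ne'))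
  refine h.congr_deriv ?_
  simp only [Pi.div_apply]
  rw [Real.rpow_sub_one h1.ne', Real.rpow_sub_one h2.ne']
  field_simp

/-- The moment generating function
`η(t,u) = (N(t,u)/D(t,u))^{X₀/γ} · (D(t,u)/2)^{λ/γ}` of the first coordinate of the
Ehrenfest-like continuum random walk satisfies
`∂η/∂t + (e^{γu} - e^{-γu})·∂η/∂u + λ(1 - e^{γu})·η = 0` for `t > 0`,
and `η(0,u) = e^{u X₀}`. -/
theorem stmt_2 (γ X₀ lam : ℝ) (hγ : 0 < γ) (hX₀ : 0 ≤ X₀) (hlam : X₀ ≤ lam)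
    (N D η : ℝ → ℝ → ℝ)
    (hN : ∀ t u : ℝ, N t u =
      1 + Real.exp (-2 * γ * t + γ * u) + Real.exp (γ * u) - Real.exp (-2 * γ * t))
    (hD : ∀ t u : ℝ, D t u =
      1 - Real.exp (-2 * γ * t + γ * u) + Real.exp (γ * u) + Real.exp (-2 * γ * t))
    (hη : ∀ t u : ℝ, η t u = (N t u / D t u) ^ (X₀ / γ) * (D t u / 2) ^ (lam / γ)) :
    (∀ t u : ℝ, 0 < t →
      deriv (fun s => η s u) t
        + (Real.exp (γ * u) - Real.exp (-γ * u)) * deriv (fun w => η t w) u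
        + lam * (1 - Real.exp (γ * u)) * η t u = 0) ∧
    (∀ u : ℝ, η 0 u = Real.exp (u * X₀)) := by
  have hγ' := hγ.ne'
  constructor
  · intro t u ht
    have e1 : ∀ s w : ℝ, Real.exp (-2 * γ * s + γ * w)
        = Real.exp (-2 * γ * s) * Real.exp (γ * w) := fun s w => Real.exp_add _ _
    have ha : 0 < Real.exp (-2 * γ * t) := Real.exp_pos _
    have ha1 : Real.exp (-2 * γ * t) < 1 := by
      rw [Real.exp_lt_one_iff]
      nlinarith [mul_pos hγ ht]
    have hb : 0 < Real.exp (γ * u) := Real.exp_pos _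
    have hinv : Real.exp (-γ * u) = (Real.exp (γ * u))⁻¹ := by
      rw [← Real.exp_neg]; congr 1; ring
    have dA : HasDerivAt (fun s : ℝ => Real.exp (-2 * γ * s))
        (Real.exp (-2 * γ * t) * (-2 * γ)) t := by
      simpa using ((hasDerivAt_id t).const_mul (-2 * γ)).exp
    have dB : HasDerivAt (fun w : ℝ => Real.exp (γ * w)) (Real.exp (γ * u) * γ) u := by
      simpa using ((hasDerivAt_id u).const_mul γ).exp
    have hNp : 0 < N t u := by
      rw [hN, e1]; nlinarith [mul_pos ha hb]
    have hDp : 0 < D t u := by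
      rw [hD, e1]; nlinarith [mul_pos (sub_pos.2 ha1) hb]
    have Nt : HasDerivAt (fun s => N s u)
        (Real.exp (-2 * γ * t) * (-2 * γ) * (Real.exp (γ * u) - 1)) t := by
      simp only [hN, e1]
      refine ((((dA.mul_const _).const_add 1).add_const _).sub dA).congr_deriv ?_
      ring
    have Dt : HasDerivAt (fun s => D s u)
        (Real.exp (-2 * γ * t) * (-2 * γ) * (1 - Real.exp (γ * u))) t := by
      simp only [hD, e1]
      refine ((((dA.mul_const _).const_sub 1).add_const _).add dA).congr_deriv ?_
      ring
    have Nu : HasDerivAt (fun w => N t w)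
        (Real.exp (γ * u) * γ * (1 + Real.exp (-2 * γ * t))) u := by
      simp only [hN, e1]
      refine ((((dB.const_mul _).const_add 1).add dB).sub_const _).congr_deriv ?_
      ring
    have Du : HasDerivAt (fun w => D t w)
        (Real.exp (γ * u) * γ * (1 - Real.exp (-2 * γ * t))) u := by
      simp only [hD, e1]
      refine ((((dB.const_mul _).const_sub 1).add dB).add_const _).congr_deriv ?_
      ring
    have h1 := (helper_deriv _ _ _ _ t (X₀ / γ) (lam / γ) Nt Dt hNp hDp).deriv
    have h2 := (helper_deriv _ _ _ _ u (X₀ / γ) (lam / γ) Nu Du hNp hDp).deriv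
    simp only [← hη] at h1 h2
    rw [h1, h2, hinv]
    have vN := hN t u
    have vD := hD t u
    rw [e1] at vN vD
    generalize Real.exp (-2 * γ * t) = a at *
    generalize Real.exp (γ * u) = b at *
    have kN : a * (-2 * γ) * (b - 1) / N t u + (b - b⁻¹) * (b * γ * (1 + a) / N t u)
        = γ * (b - 1) := by
      field_simp
      rw [vN]; ring
    have kD : a * (-2 * γ) * (1 - b) / D t u + (b - b⁻¹) * (b * γ * (1 - a) / D t u)
        = γ * (b - 1) := by
      field_simp
      rw [vD]; ring
    have hq : lam / γ * γ = lam := by field_simp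
    linear_combination η t u * (X₀ / γ) * kN + η t u * (lam / γ - X₀ / γ) * kD
      + η t u * (b - 1) * hq
  · intro u
    have h1 : N 0 u = 2 * Real.exp (γ * u) := by rw [hN]; simp; ring
    have h2 : D 0 u = 2 := by rw [hD]; simp; ring
    rw [hη, h1, h2, mul_div_cancel_left₀ _ (two_ne_zero), div_self two_ne_zero, Real.one_rpow,
      mul_one, ← Real.exp_mul]
    congr 1
    field_simp
end

section
/- Let γ > 0 and 0 ≤ X₀ < Y₀ be real numbers, set λ = Y₀ - X₀, and let η(t,u) = (e^{γu} - γt(e^{γu} - 1))^{X₀/γ} / (1 - γt(e^{γu} - 1))^{Y₀/γ}. Then for every t ≥ 0, the second partial derivative of η with respect to u at u = 0, minus the square of the first partial derivative of η with respect to u at u = 0, equals λγ³t² + (2X₀ + λ)γ²t. -/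
/-- For the 45-degree-hill moment generating function
`η(t,u) = (e^{γu} - γt(e^{γu}-1))^{X₀/γ} / (1 - γt(e^{γu}-1))^{Y₀/γ}`
with `λ = Y₀ - X₀`, for every `t ≥ 0`,
`∂²η/∂u²(t,0) - (∂η/∂u(t,0))² = λγ³t² + (2X₀ + λ)γ²t` (the variance of `X(t)`). -/
theorem stmt_6 (γ X₀ Y₀ lam : ℝ) (hγ : 0 < γ) (hX₀ : 0 ≤ X₀) (hXY : X₀ < Y₀)
    (hlam : lam = Y₀ - X₀)
    (η : ℝ → ℝ → ℝ)
    (hη : ∀ t u : ℝ, η t u =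
      (Real.exp (γ * u) - γ * t * (Real.exp (γ * u) - 1)) ^ (X₀ / γ) /
        (1 - γ * t * (Real.exp (γ * u) - 1)) ^ (Y₀ / γ)) :
    ∀ t : ℝ, 0 ≤ t →
      iteratedDeriv 2 (fun u => η t u) 0 - (deriv (fun u => η t u) 0) ^ 2
        = lam * γ ^ 3 * t ^ 2 + (2 * X₀ + lam) * γ ^ 2 * t := by
  intro t _
  have hE : ∀ u : ℝ, HasDerivAt (fun u : ℝ => Real.exp (γ * u)) (γ * Real.exp (γ * u)) u := by
    intro u
    have h := ((hasDerivAt_id u).const_mul γ).exp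
    simpa [mul_comm] using h
  have hA : ∀ u : ℝ, HasDerivAt (fun u : ℝ => Real.exp (γ * u) - γ * t * (Real.exp (γ * u) - 1))
      (γ * Real.exp (γ * u) - γ * t * (γ * Real.exp (γ * u))) u := fun u =>
    (hE u).sub (((hE u).sub_const 1).const_mul (γ * t))
  have hB : ∀ u : ℝ, HasDerivAt (fun u : ℝ => 1 - γ * t * (Real.exp (γ * u) - 1))
      (-(γ * t * (γ * Real.exp (γ * u)))) u := fun u =>
    (((hE u).sub_const 1).const_mul (γ * t)).const_sub 1
  have hApos : ∀ᶠ u in nhds (0 : ℝ),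
      0 < Real.exp (γ * u) - γ * t * (Real.exp (γ * u) - 1) :=
    (hA 0).continuousAt.eventually (lt_mem_nhds (by simp))
  have hBpos : ∀ᶠ u in nhds (0 : ℝ), 0 < 1 - γ * t * (Real.exp (γ * u) - 1) :=
    (hB 0).continuousAt.eventually (lt_mem_nhds (by simp))
  have hfe : (fun u => η t u) =ᶠ[nhds 0] fun u =>
      Real.exp (Real.log (Real.exp (γ * u) - γ * t * (Real.exp (γ * u) - 1)) * (X₀ / γ)
        - Real.log (1 - γ * t * (Real.exp (γ * u) - 1)) * (Y₀ / γ)) := by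
    filter_upwards [hApos, hBpos] with u h1 h2
    rw [hη, Real.rpow_def_of_pos h1, Real.rpow_def_of_pos h2, Real.exp_sub]
  have hder : ∀ᶠ u in nhds (0 : ℝ), HasDerivAt (fun u => η t u)
      (η t u * ((γ * Real.exp (γ * u) - γ * t * (γ * Real.exp (γ * u))) /
          (Real.exp (γ * u) - γ * t * (Real.exp (γ * u) - 1)) * (X₀ / γ)
        - (-(γ * t * (γ * Real.exp (γ * u)))) / (1 - γ * t * (Real.exp (γ * u) - 1))
          * (Y₀ / γ))) u := by
    filter_upwards [hApos, hBpos, hfe.eventuallyEq_nhds] with u h1 h2 h3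
    have h := ((((hA u).log h1.ne').mul_const (X₀ / γ)).sub
      (((hB u).log h2.ne').mul_const (Y₀ / γ))).exp
    have h4 := h.congr_of_eventuallyEq h3
    have h5 := h3.eq_of_nhds
    rw [h5]
    exact h4
  have h0 : η t 0 = 1 := by rw [hη]; simp
  have hd0 := hder.self_of_nhds
  have hde : deriv (fun u => η t u) =ᶠ[nhds 0] fun u =>
      (η t u * ((γ * Real.exp (γ * u) - γ * t * (γ * Real.exp (γ * u))) /
          (Real.exp (γ * u) - γ * t * (Real.exp (γ * u) - 1)) * (X₀ / γ)
        - (-(γ * t * (γ * Real.exp (γ * u)))) / (1 - γ * t * (Real.exp (γ * u) - 1))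
          * (Y₀ / γ))) := by
    filter_upwards [hder] with u hu using hu.deriv
  have hE1 := (hE 0).const_mul γ
  have hE2 := hE1.const_mul (γ * t)
  have hg := ((((hE1.sub hE2).div (hA 0) hApos.self_of_nhds.ne').mul_const (X₀ / γ)).sub
    ((hE2.neg.div (hB 0) hBpos.self_of_nhds.ne').mul_const (Y₀ / γ)))
  have h2 := (hd0.mul hg).congr_of_eventuallyEq hde
  rw [iteratedDeriv_succ, iteratedDeriv_one, h2.deriv, hd0.deriv, hlam]
  simp [h0]
  field_simp
  ring
end

section
/- Let γ > 0 and 0 ≤ X₀ < Y₀ be real numbers, set λ = Y₀ - X₀, and let η(t,u) = (e^{γu} - γt(e^{γu} - 1))^{X₀/γ} / (1 - γt(e^{γu} - 1))^{Y₀/γ}. Then for every real s with γ²s < 1, lim_{t→∞} η(t, s/t) = (1 - γ²s)^{-λ/γ}. -/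
/-- For the 45-degree-hill moment generating function
`η(t,u) = (e^{γu} - γt(e^{γu}-1))^{X₀/γ} / (1 - γt(e^{γu}-1))^{Y₀/γ}`
with `λ = Y₀ - X₀`, for every real `s` with `γ²s < 1`,
`lim_{t→∞} η(t, s/t) = (1 - γ²s)^{-λ/γ}`. -/
theorem stmt_7 (γ X₀ Y₀ lam : ℝ) (hγ : 0 < γ) (hX₀ : 0 ≤ X₀) (hXY : X₀ < Y₀)
    (hlam : lam = Y₀ - X₀)
    (η : ℝ → ℝ → ℝ)
    (hη : ∀ t u : ℝ, η t u =
      (Real.exp (γ * u) - γ * t * (Real.exp (γ * u) - 1)) ^ (X₀ / γ) /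
        (1 - γ * t * (Real.exp (γ * u) - 1)) ^ (Y₀ / γ)) :
    ∀ s : ℝ, γ ^ 2 * s < 1 →
      Filter.Tendsto (fun t => η t (s / t)) Filter.atTop
        (nhds ((1 - γ ^ 2 * s) ^ (-(lam / γ)))) := by
  intro s hs
  have hd : HasDerivAt (fun v : ℝ => Real.exp (γ * s * v)) (γ * s) 0 := by
    have h := ((hasDerivAt_id (0 : ℝ)).const_mul (γ * s)).exp
    simpa using h
  have h1 : Filter.Tendsto (fun t : ℝ => t * (Real.exp (γ * (s / t)) - 1)) Filter.atTop
      (nhds (γ * s)) := by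
    have h := hd.tendsto_slope_zero_right.comp tendsto_inv_atTop_nhdsGT_zero
    refine h.congr fun t => ?_
    simp [div_eq_mul_inv, mul_assoc]
  have h2 : Filter.Tendsto (fun t : ℝ => Real.exp (γ * (s / t))) Filter.atTop (nhds 1) := by
    have h : Filter.Tendsto (fun t : ℝ => γ * (s / t)) Filter.atTop (nhds (γ * 0)) :=
      (Filter.Tendsto.div_atTop tendsto_const_nhds Filter.tendsto_id).const_mul γ
    have h' := (Real.continuous_exp.tendsto _).comp h
    simpa [Function.comp_def] using h'
  have h3 : Filter.Tendsto (fun t : ℝ => γ * t * (Real.exp (γ * (s / t)) - 1)) Filter.atTop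
      (nhds (γ ^ 2 * s)) := by
    have h := h1.const_mul γ
    rw [show γ * (γ * s) = γ ^ 2 * s by ring] at h
    exact h.congr fun t => by ring
  have hpos : 0 < 1 - γ ^ 2 * s := by linarith
  have hnum := (h2.sub h3).rpow_const (p := X₀ / γ) (Or.inl hpos.ne')
  have hden := ((tendsto_const_nhds (x := (1 : ℝ))).sub h3).rpow_const (p := Y₀ / γ)
    (Or.inl hpos.ne')
  have h := hnum.div hden (Real.rpow_pos_of_pos hpos _).ne'
  rw [← Real.rpow_sub hpos, show X₀ / γ - Y₀ / γ = -(lam / γ) by rw [hlam]; ring] at h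
  exact h.congr fun t => (hη t (s / t)).symm
end

section
/- Let 0 < α < δ, X₀ > 0 and Y₀ ≥ 0 be real numbers. Define φ(t,u,v) = e^{-X₀t}·(e^{-αu} - e^{-αv} + (e^{-δv} - 1 + e^{-δt})^{α/δ})^{-X₀/α} · e^{-Y₀t}·(e^{-δv} - 1 + e^{-δt})^{-Y₀/δ}. Then at every point (t,u,v) with e^{-δv} - 1 + e^{-δt} > 0 and e^{-αu} - e^{-αv} + (e^{-δv} - 1 + e^{-δt})^{α/δ} > 0, φ satisfies the partial differential equation ∂φ/∂t + (1 - e^{αu + (δ-α)v})·∂φ/∂u + (1 - e^{δv})·∂φ/∂v = 0, and φ(0,u,v) = e^{uX₀ + vY₀} for all real u, v. -/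
/-- Logarithmic-derivative form of the derivative of `φ` along a curve. -/
theorem aux_deriv (X Y r p q x : ℝ) (T E A : ℝ → ℝ) (T' E' A' : ℝ)
    (hT : HasDerivAt T T' x) (hE : HasDerivAt E E' x) (hA : HasDerivAt A A' x)
    (h1 : 0 < A x) (h2 : 0 < E x + A x ^ r) :
    HasDerivAt (fun s => Real.exp (-X * T s) * (E s + A s ^ r) ^ p *
        (Real.exp (-Y * T s) * A s ^ q))
      (Real.exp (-X * T x) * (E x + A x ^ r) ^ p * (Real.exp (-Y * T x) * A x ^ q) *
        (-(X + Y) * T' + p * (E' + r * (A' / A x) * A x ^ r) / (E x + A x ^ r)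
          + q * (A' / A x))) x := by
  have hAr := hA.rpow_const (p := r) (Or.inl h1.ne')
  have hAq := hA.rpow_const (p := q) (Or.inl h1.ne')
  have hB := (hE.fun_add hAr).rpow_const (p := p) (Or.inl h2.ne')
  have hX := (hT.const_mul (-X)).exp
  have hY := (hT.const_mul (-Y)).exp
  refine ((hX.fun_mul hB).fun_mul (hY.fun_mul hAq)).congr_deriv ?_
  rw [Real.rpow_sub_one h1.ne', Real.rpow_sub_one h1.ne', Real.rpow_sub_one h2.ne']
  generalize (E x + A x ^ r) ^ p = P
  generalize A x ^ q = Q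
  generalize A x ^ r = R at *
  have := h1.ne'
  have := h2.ne'
  field_simp
  ring

/-- Derivative of `s ↦ e^{c s}`. -/
theorem aux_exp (c x : ℝ) : HasDerivAt (fun s => Real.exp (c * s)) (c * Real.exp (c * x)) x := by
  have := ((hasDerivAt_id x).const_mul c).exp
  simpa [mul_comm] using this


/-- The joint moment generating function
`φ(t,u,v) = e^{-X₀t}(e^{-αu} - e^{-αv} + (e^{-δv} - 1 + e^{-δt})^{α/δ})^{-X₀/α}
  · e^{-Y₀t}(e^{-δv} - 1 + e^{-δt})^{-Y₀/δ}`
of the balanced triangular continuum random walk satisfies the fundamental PDE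
`∂φ/∂t + (1 - e^{αu + (δ-α)v})∂φ/∂u + (1 - e^{δv})∂φ/∂v = 0` wherever the bases are
positive, and `φ(0,u,v) = e^{uX₀ + vY₀}`. -/
theorem stmt_8 (α δ X₀ Y₀ : ℝ) (hα : 0 < α) (hαδ : α < δ) (hX₀ : 0 < X₀) (hY₀ : 0 ≤ Y₀)
    (φ : ℝ → ℝ → ℝ → ℝ)
    (hφ : ∀ t u v : ℝ, φ t u v =
      Real.exp (-X₀ * t) *
        (Real.exp (-α * u) - Real.exp (-α * v) +
          (Real.exp (-δ * v) - 1 + Real.exp (-δ * t)) ^ (α / δ)) ^ (-X₀ / α) *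
      (Real.exp (-Y₀ * t) *
        (Real.exp (-δ * v) - 1 + Real.exp (-δ * t)) ^ (-Y₀ / δ))) :
    (∀ t u v : ℝ,
      0 < Real.exp (-δ * v) - 1 + Real.exp (-δ * t) →
      0 < Real.exp (-α * u) - Real.exp (-α * v) +
            (Real.exp (-δ * v) - 1 + Real.exp (-δ * t)) ^ (α / δ) →
      deriv (fun s => φ s u v) t
        + (1 - Real.exp (α * u + (δ - α) * v)) * deriv (fun w => φ t w v) u
        + (1 - Real.exp (δ * v)) * deriv (fun w => φ t u w) v = 0) ∧
    (∀ u v : ℝ, φ 0 u v = Real.exp (u * X₀ + v * Y₀)) := by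
  have hδ : 0 < δ := hα.trans hαδ
  refine ⟨fun t u v h1 h2 => ?_, fun u v => ?_⟩
  · have ht := aux_deriv X₀ Y₀ (α / δ) (-X₀ / α) (-Y₀ / δ) t (fun s => s)
      (fun _ => Real.exp (-α * u) - Real.exp (-α * v))
      (fun s => Real.exp (-δ * v) - 1 + Real.exp (-δ * s)) _ _ _
      (hasDerivAt_id' t) (hasDerivAt_const t _) ((aux_exp (-δ) t).const_add _) h1 h2
    have hu := aux_deriv X₀ Y₀ (α / δ) (-X₀ / α) (-Y₀ / δ) u (fun _ => t)
      (fun s => Real.exp (-α * s) - Real.exp (-α * v))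
      (fun _ => Real.exp (-δ * v) - 1 + Real.exp (-δ * t)) _ _ _
      (hasDerivAt_const u _) ((aux_exp (-α) u).sub_const _) (hasDerivAt_const u _) h1 h2
    have hv := aux_deriv X₀ Y₀ (α / δ) (-X₀ / α) (-Y₀ / δ) v (fun _ => t)
      (fun s => Real.exp (-α * u) - Real.exp (-α * s))
      (fun s => Real.exp (-δ * s) - 1 + Real.exp (-δ * t)) _ _ _
      (hasDerivAt_const v _) ((aux_exp (-α) v).const_sub _)
      (((aux_exp (-δ) v).sub_const _).add_const _) h1 h2
    simp only [hφ]
    rw [ht.deriv, hu.deriv, hv.deriv]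
    have e1 : Real.exp (α * u + (δ - α) * v) * Real.exp (-α * u)
        = Real.exp (δ * v) * Real.exp (-α * v) := by
      rw [← Real.exp_add, ← Real.exp_add]; ring_nf
    have e2 : Real.exp (δ * v) * Real.exp (-δ * v) = 1 := by
      rw [← Real.exp_add]; ring_nf; exact Real.exp_zero
    generalize (Real.exp (-α * u) - Real.exp (-α * v) +
      (Real.exp (-δ * v) - 1 + Real.exp (-δ * t)) ^ (α / δ)) ^ (-X₀ / α) = P
    generalize (Real.exp (-δ * v) - 1 + Real.exp (-δ * t)) ^ (-Y₀ / δ) = Q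
    generalize (Real.exp (-δ * v) - 1 + Real.exp (-δ * t)) ^ (α / δ) = R at *
    generalize Real.exp (α * u + (δ - α) * v) = G at *
    generalize Real.exp (-α * u) = a at *
    generalize Real.exp (-α * v) = b at *
    generalize Real.exp (δ * v) = H at *
    generalize Real.exp (-δ * v) = d at *
    generalize Real.exp (-δ * t) = τ at *
    obtain ⟨A, hA⟩ : ∃ A, A = d - 1 + τ := ⟨_, rfl⟩
    obtain ⟨B, hB⟩ : ∃ B, B = a - b + R := ⟨_, rfl⟩
    rw [← hA] at h1 ⊢
    rw [← hB] at h2 ⊢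
    have hA0 := h1.ne'
    have hB0 := h2.ne'
    have hτ : τ = A - d + 1 := by linarith
    have hR : R = B - a + b := by linarith
    subst hτ hR
    generalize Real.exp (-X₀ * t) = U
    generalize Real.exp (-Y₀ * t) = V
    have key : -(X₀ + Y₀) * 1 + -X₀ / α * (0 + α / δ * (-δ * (A - d + 1) / A) * (B - a + b)) / B
          + -Y₀ / δ * (-δ * (A - d + 1) / A)
        + (1 - G) * (-(X₀ + Y₀) * 0 + -X₀ / α * (-α * a + α / δ * (0 / A) * (B - a + b)) / B
          + -Y₀ / δ * (0 / A))
        + (1 - H) * (-(X₀ + Y₀) * 0 + -X₀ / α * (-(-α * b) + α / δ * (-δ * d / A) * (B - a + b)) / B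
          + -Y₀ / δ * (-δ * d / A)) = 0 := by
      field_simp
      linear_combination α * δ * ((-X₀ * A) * e1 + (-X₀ * (B - a + b) - Y₀ * B) * e2)
    linear_combination (U * P * (V * Q)) * key
  · rw [hφ]
    have e : Real.exp (-δ * v) - 1 + Real.exp (-δ * 0) = Real.exp (-δ * v) := by simp
    rw [e, ← Real.exp_mul, ← Real.exp_mul]
    have e' : -δ * v * (α / δ) = -α * v := by field_simp
    rw [e', sub_add_cancel, ← Real.exp_mul, ← Real.exp_add, ← Real.exp_add, ← Real.exp_add]
    congr 1
    field_simp
    ring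
end

section
/- Let 0 < α < δ be real numbers and let F : ℝ × ℝ → ℝ be a differentiable function. Define φ(t,u,v) = F(e^{αt}(e^{-αu} - e^{-αv}), e^{δt}(e^{-δv} - 1)). Then φ satisfies the partial differential equation ∂φ/∂t + (1 - e^{αu + (δ-α)v})·∂φ/∂u + (1 - e^{δv})·∂φ/∂v = 0 at every point (t,u,v) ∈ ℝ³. -/
/-- For `0 < α < δ` and any differentiable `F : ℝ × ℝ → ℝ`, the function
`φ(t,u,v) = F(e^{αt}(e^{-αu} - e^{-αv}), e^{δt}(e^{-δv} - 1))` solves the fundamental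
PDE `∂φ/∂t + (1 - e^{αu + (δ-α)v})∂φ/∂u + (1 - e^{δv})∂φ/∂v = 0` everywhere. -/
theorem stmt_11 (α δ : ℝ) (hα : 0 < α) (hαδ : α < δ)
    (F : ℝ × ℝ → ℝ) (hF : Differentiable ℝ F)
    (φ : ℝ → ℝ → ℝ → ℝ)
    (hφ : ∀ t u v : ℝ, φ t u v =
      F (Real.exp (α * t) * (Real.exp (-α * u) - Real.exp (-α * v)),
         Real.exp (δ * t) * (Real.exp (-δ * v) - 1))) :
    ∀ t u v : ℝ,
      deriv (fun s => φ s u v) t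
        + (1 - Real.exp (α * u + (δ - α) * v)) * deriv (fun w => φ t w v) u
        + (1 - Real.exp (δ * v)) * deriv (fun w => φ t u w) v = 0 := by
  intro t u v
  have lin : ∀ c x : ℝ, HasDerivAt (fun s : ℝ => Real.exp (c * s)) (Real.exp (c * x) * c) x := by
    intro c x
    simpa using ((hasDerivAt_id x).const_mul c).exp
  have hL := (hF (Real.exp (α * t) * (Real.exp (-α * u) - Real.exp (-α * v)),
         Real.exp (δ * t) * (Real.exp (-δ * v) - 1))).hasFDerivAt
  set L := fderiv ℝ F (Real.exp (α * t) * (Real.exp (-α * u) - Real.exp (-α * v)),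
         Real.exp (δ * t) * (Real.exp (-δ * v) - 1)) with hLdef
  have h1 : HasDerivAt (fun s => φ s u v)
      (L (Real.exp (α * t) * α * (Real.exp (-α * u) - Real.exp (-α * v)),
        Real.exp (δ * t) * δ * (Real.exp (-δ * v) - 1))) t := by
    simp only [hφ]
    exact hL.comp_hasDerivAt t (((lin α t).mul_const _).prodMk ((lin δ t).mul_const _))
  have h2 : HasDerivAt (fun w => φ t w v)
      (L (Real.exp (α * t) * (Real.exp (-α * u) * (-α)), 0)) u := by
    simp only [hφ]
    exact hL.comp_hasDerivAt u
      ((((lin (-α) u).sub_const _).const_mul _).prodMk (hasDerivAt_const u _))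
  have h3 : HasDerivAt (fun w => φ t u w)
      (L (Real.exp (α * t) * (-(Real.exp (-α * v) * (-α))),
        Real.exp (δ * t) * (Real.exp (-δ * v) * (-δ)))) v := by
    simp only [hφ]
    exact hL.comp_hasDerivAt v
      ((((lin (-α) v).const_sub _).const_mul _).prodMk
        (((lin (-δ) v).sub_const _).const_mul _))
  rw [h1.deriv, h2.deriv, h3.deriv]
  have hs : ∀ (c : ℝ) (p : ℝ × ℝ), c * L p = L (c • p) := by
    intro c p
    rw [map_smul, smul_eq_mul]
  rw [hs, hs, ← map_add, ← map_add]
  have e1 : Real.exp (α * u + (δ - α) * v) * Real.exp (-α * u)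
      = Real.exp (δ * v) * Real.exp (-α * v) := by
    rw [← Real.exp_add, ← Real.exp_add]
    congr 1
    ring
  have e2 : Real.exp (δ * v) * Real.exp (-δ * v) = 1 := by
    rw [← Real.exp_add, ← Real.exp_zero]
    congr 1
    ring
  convert map_zero L using 2
  ext
  · simp only [Prod.fst_add, Prod.smul_fst, smul_eq_mul, Prod.fst_zero]
    linear_combination (Real.exp (α * t) * α) * e1
  · simp only [Prod.snd_add, Prod.smul_snd, smul_eq_mul, Prod.snd_zero]
    linear_combination (Real.exp (δ * t) * δ) * e2
end

section
/- Let i > 0 and δ > 0 be real numbers, let t > 0, and let v be a real number with e^{δv}·(1 - e^{-δt}) < 1. Then the series ∑_{ℓ=0}^{∞} ((∏_{k=0}^{ℓ-1}(i/δ + k))/ℓ!) · e^{-it}·(1 - e^{-δt})^ℓ · e^{v(i + δℓ)} converges and its sum equals (1 - e^{δt} + e^{δ(t-v)})^{-i/δ}. -/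
lemma multichoose_aux (a : ℝ) (n : ℕ) :
    Ring.choose (a + n - 1) n = (∏ k ∈ Finset.range n, (a + k)) / (Nat.factorial n) := by
  have h := Ring.factorial_nsmul_multichoose_eq_ascPochhammer a n
  have h2 : (ascPochhammer ℝ n).eval a = ∏ k ∈ Finset.range n, (a + k) := by
    induction n with
    | zero => simp
    | succ m ih =>
      rw [ascPochhammer_succ_eval, Finset.prod_range_succ,
        ih (Ring.factorial_nsmul_multichoose_eq_ascPochhammer a m)]
  rw [Polynomial.ascPochhammer_smeval_eq_eval, h2, nsmul_eq_mul] at h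
  have hf : (Nat.factorial n : ℝ) ≠ 0 := by positivity
  rw [← h, Ring.choose, mul_div_cancel_left₀ _ hf]
  congr 1
  ring

/-- For `i, δ > 0`, `t > 0` and `e^{δv}(1 - e^{-δt}) < 1`, the series
`∑_ℓ ((∏_{k=0}^{ℓ-1}(i/δ+k))/ℓ!) e^{-it}(1-e^{-δt})^ℓ e^{v(i+δℓ)}` converges with sum
`(1 - e^{δt} + e^{δ(t-v)})^{-i/δ}`. -/
theorem stmt_13 (i δ t v : ℝ) (hi : 0 < i) (hδ : 0 < δ) (ht : 0 < t)
    (hv : Real.exp (δ * v) * (1 - Real.exp (-δ * t)) < 1) :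
    HasSum
      (fun ℓ : ℕ =>
        (∏ k ∈ Finset.range ℓ, (i / δ + k)) / (Nat.factorial ℓ) *
          Real.exp (-i * t) * (1 - Real.exp (-δ * t)) ^ ℓ *
          Real.exp (v * (i + δ * ℓ)))
      ((1 - Real.exp (δ * t) + Real.exp (δ * (t - v))) ^ (-i / δ)) := by
  set x := Real.exp (δ * v) * (1 - Real.exp (-δ * t)) with hx
  have hx0 : 0 ≤ x := by
    apply mul_nonneg (Real.exp_pos _).le
    have : Real.exp (-δ * t) ≤ 1 := Real.exp_le_one_iff.2 (by nlinarith)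
    linarith
  have hmem : x ∈ Metric.eball (0 : ℝ) 1 := by
    have : x ∈ Metric.ball (0 : ℝ) 1 := by
      simp [abs_of_nonneg hx0, hv]
    simpa [← Metric.eball_ofReal] using this
  have H := (Real.one_div_one_sub_rpow_hasFPowerSeriesOnBall_zero (i / δ)).hasSum hmem
  have H2 := H.mul_left (Real.exp (i * (v - t)))
  have e1 : 1 - Real.exp (δ * t) + Real.exp (δ * (t - v)) = Real.exp (δ * (t - v)) * (1 - x) := by
    have a1 : Real.exp (δ * (t - v)) * Real.exp (δ * v) = Real.exp (δ * t) := by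
      rw [← Real.exp_add]; ring_nf
    have a2 : Real.exp (δ * t) * Real.exp (-δ * t) = 1 := by
      rw [← Real.exp_add]; ring_nf; simp
    rw [hx]
    linear_combination a1 * (1 - Real.exp (-δ * t)) - a2
  convert H2 using 1
  · rfl
  · funext l
    simp [FormalMultilinearSeries.ofScalars, multichoose_aux]
    rw [hx, mul_pow, ← Real.exp_nat_mul]
    have : Real.exp (v * (i + δ * l)) * Real.exp (-(i * t)) =
      Real.exp (i * (v - t)) * Real.exp (l * (δ * v)) := by
      rw [← Real.exp_add, ← Real.exp_add]; ring_nf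
    rw [neg_mul]
    linear_combination ((∏ k ∈ Finset.range l, (i / δ + k)) / (Nat.factorial l) *
      (1 - Real.exp (-(δ * t))) ^ l) * this
  · rw [e1, Real.mul_rpow (Real.exp_pos _).le (by linarith), ← Real.exp_mul, zero_add,
      neg_div, Real.rpow_neg (by linarith), one_div]
    congr 2
    field_simp
    ring
end

section
/- Let μ be a real number with μ ≠ 1 and let Z be a real number with -1 < Z < 1 and Z ≠ 0. Then the series ∑_{n=0}^{∞} (∏_{k=0}^{n-1}(μ + k)) · Zⁿ/(n+1)! converges and its sum equals (1 - (1-Z)^{1-μ}) / ((1-μ)·Z). -/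
lemma aux_desc (μ : ℝ) (n : ℕ) : (descPochhammer ℤ (n+1)).smeval (1 - μ) =
    (-1) ^ n * (1 - μ) * ∏ k ∈ Finset.range n, (μ + k) := by
  induction n with
  | zero => simp
  | succ n ih =>
    rw [descPochhammer_succ_right, Polynomial.smeval_mul, ih, Finset.prod_range_succ,
      Polynomial.smeval_sub, Polynomial.smeval_X, Polynomial.smeval_natCast]
    simp
    ring

/-- Gauss hypergeometric identity
`₂F₁(μ, 1; 2; Z) = ∑_n (μ)ₙ Zⁿ/(n+1)! = (1 - (1-Z)^{1-μ})/((1-μ)Z)`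
for `μ ≠ 1` and `-1 < Z < 1`, `Z ≠ 0`. -/
theorem stmt_15 (μ Z : ℝ) (hμ : μ ≠ 1) (hZ₁ : -1 < Z) (hZ₂ : Z < 1) (hZ₀ : Z ≠ 0) :
    HasSum
      (fun n : ℕ =>
        (∏ k ∈ Finset.range n, (μ + k)) * Z ^ n / (Nat.factorial (n + 1)))
      ((1 - (1 - Z) ^ (1 - μ)) / ((1 - μ) * Z)) := by
  have hm : (1 - μ) ≠ 0 := sub_ne_zero.2 hμ.symm
  have hmem : -Z ∈ Metric.eball (0 : ℝ) 1 := by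
    rw [← ENNReal.ofReal_one, Metric.eball_ofReal]
    simp [abs_lt]
    constructor <;> linarith
  have h := (Real.one_add_rpow_hasFPowerSeriesOnBall_zero (a := 1 - μ)).hasSum hmem
  simp only [binomialSeries_apply, zero_add] at h
  rw [← hasSum_nat_add_iff' 1] at h
  have h2 := h.mul_left (-1 / ((1 - μ) * Z))
  convert h2 using 1
  · rfl
  · funext n
    simp only [Ring.choose_eq_smul, aux_desc, smul_eq_mul, List.ofFn_const, List.prod_replicate]
    have : (Nat.factorial (n+1) : ℝ) ≠ 0 := by positivity
    field_simp
    rw [neg_pow Z, pow_succ (-1 : ℝ)]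
    have h1 : ((-1 : ℝ) ^ n) * (-1) ^ n = 1 := by rw [← mul_pow]; simp
    linear_combination (-(∏ k ∈ Finset.range n, (μ + k)) * Z ^ (n+1)) * h1
  · simp
    field_simp
    ring_nf
end

section
/- Let 0 < α < δ, X₀ > 0 and Y₀ ≥ 0 be real numbers, and let φ(t,u,v) = e^{-X₀t}·(e^{-αu} - e^{-αv} + (e^{-δv} - 1 + e^{-δt})^{α/δ})^{-X₀/α} · e^{-Y₀t}·(e^{-δv} - 1 + e^{-δt})^{-Y₀/δ}. Then for every real t, the second partial derivative of φ with respect to u, evaluated at (t, 0, 0), equals X₀(α + X₀)·e^{2αt} - αX₀·e^{αt}. -/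
/-- For the balanced-triangular joint moment generating function
`φ(t,u,v)`, the second partial derivative with respect to `u` at `(t,0,0)` equals
`X₀(α + X₀)·e^{2αt} - αX₀·e^{αt}` (the second moment `E[X(t)²]`). -/
theorem stmt_19 (α δ X₀ Y₀ : ℝ) (hα : 0 < α) (hαδ : α < δ) (hX₀ : 0 < X₀) (hY₀ : 0 ≤ Y₀)
    (φ : ℝ → ℝ → ℝ → ℝ)
    (hφ : ∀ t u v : ℝ, φ t u v =
      Real.exp (-X₀ * t) *
        (Real.exp (-α * u) - Real.exp (-α * v) +
          (Real.exp (-δ * v) - 1 + Real.exp (-δ * t)) ^ (α / δ)) ^ (-X₀ / α) *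
      (Real.exp (-Y₀ * t) *
        (Real.exp (-δ * v) - 1 + Real.exp (-δ * t)) ^ (-Y₀ / δ))) :
    ∀ t : ℝ, iteratedDeriv 2 (fun u => φ t u 0) 0
      = X₀ * (α + X₀) * Real.exp (2 * α * t) - α * X₀ * Real.exp (α * t) := by
  intro t
  have hδ : 0 < δ := hα.trans hαδ
  have hfun : (fun u => φ t u 0) = fun u => Real.exp (-X₀ * t) *
      (Real.exp (-α * u) - 1 + Real.exp (-α * t)) ^ (-X₀ / α) := by
    funext u
    rw [hφ]
    have h1 : Real.exp (-δ * 0) - 1 + Real.exp (-δ * t) = Real.exp (-δ * t) := by simp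
    have h2 : Real.exp (-α * 0) = 1 := by simp
    rw [h1, h2, ← Real.exp_mul, ← Real.exp_mul, ← Real.exp_add]
    have h3 : -δ * t * (α / δ) = -α * t := by field_simp
    have h4 : -Y₀ * t + -δ * t * (-Y₀ / δ) = 0 := by field_simp; ring
    rw [h3, h4, Real.exp_zero, mul_one]
  have hg : ∀ u, HasDerivAt (fun u => Real.exp (-α * u) - 1 + Real.exp (-α * t))
      (-α * Real.exp (-α * u)) u := by
    intro u
    have h := (((hasDerivAt_id u).const_mul (-α)).exp.sub_const 1).add_const (Real.exp (-α * t))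
    refine h.congr_deriv ?_
    simp only [id]
    ring
  have hpos : ∀ᶠ u in nhds (0:ℝ), 0 < Real.exp (-α * u) - 1 + Real.exp (-α * t) := by
    refine (hg 0).continuousAt.eventually (lt_mem_nhds ?_)
    simpa using Real.exp_pos _
  have hd : deriv (fun u => φ t u 0) =ᶠ[nhds 0] fun u => Real.exp (-X₀ * t) *
      (X₀ * Real.exp (-α * u) *
        (Real.exp (-α * u) - 1 + Real.exp (-α * t)) ^ (-X₀ / α - 1)) := by
    filter_upwards [hpos] with u hu
    rw [hfun]
    have h := ((hg u).rpow_const (p := -X₀ / α) (Or.inl hu.ne')).const_mul (Real.exp (-X₀ * t))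
    rw [h.deriv]
    field_simp
  rw [iteratedDeriv_succ, iteratedDeriv_one, hd.deriv_eq]
  have hp0 : Real.exp (-α * 0) - 1 + Real.exp (-α * t) = Real.exp (-α * t) := by simp
  have he : HasDerivAt (fun u => X₀ * Real.exp (-α * u)) (X₀ * -α) 0 := by
    have h := (((hasDerivAt_id (0:ℝ)).const_mul (-α)).exp).const_mul X₀
    refine h.congr_deriv ?_
    simp
  have h := (he.mul ((hg 0).rpow_const (p := -X₀ / α - 1)
    (Or.inl hpos.self_of_nhds.ne'))).const_mul (Real.exp (-X₀ * t))
  refine h.deriv.trans ?_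
  rw [hp0, ← Real.exp_mul, ← Real.exp_mul]
  have e1 : -α * t * (-X₀ / α - 1) = X₀ * t + α * t := by field_simp; ring
  have e2 : -α * t * (-X₀ / α - 1 - 1) = X₀ * t + 2 * α * t := by field_simp; ring
  have e3 : Real.exp (-X₀ * t) * Real.exp (X₀ * t) = 1 := by
    rw [← Real.exp_add]; simp
  have e4 : -α * (-X₀ / α - 1) = X₀ + α := by field_simp; ring
  rw [e1, e2, Real.exp_add, Real.exp_add, mul_zero, Real.exp_zero, mul_one, mul_one, e4]
  linear_combination (X₀ * (α + X₀) * Real.exp (2 * α * t) - α * X₀ * Real.exp (α * t)) * e3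
end
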